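/- Let y, λ : [0,∞) → ℝ be càdlàg functions with y_0 ≥ λ_0. Define k_t = sup_{s≤t} (λ_s − y_s)⁺ (where a⁺ = max(a, 0)) and x_t = y_t + k_t. Then k is nondecreasing and càdlàg with k_0 = 0, x_t ≥ λ_t for all t ≥ 0, and ∫_{[0,t]} (x_s − λ_s) dk_s = 0 for every t ≥ 0, where dk denotes the Lebesgue–Stieltjes measure of the nondecreasing right-continuous function k; that is, (x, k) solves the deterministic Skorokhod problem with the single lower barrier λ. -/

import Mathlib

open MeasureTheory Filter Set Function Topology

noncomputable section

/-- A function with values in a topological space is càdlàg on `[0,∞)`: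
right-continuous at every `t ≥ 0` and admitting a left limit at every `t > 0`. -/
def CadlagOn {E : Type*} [TopologicalSpace E] (f : ℝ → E) : Prop :=
  (∀ t : ℝ, 0 ≤ t → ContinuousWithinAt f (Set.Ici t) t) ∧
  ∀ t : ℝ, 0 < t → ∃ L : E, Filter.Tendsto f (nhdsWithin t (Set.Iio t)) (nhds L)

/-- Condition (H) on `h : [0,∞) × ℝ → ℝ` with constants `Mh, Lh, ch, Ch`. -/
structure CondH (h : ℝ → ℝ → ℝ) (Mh Lh ch Ch : ℝ) : Prop where
  meas : Measurable (Function.uncurry h)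
  Mh_pos : 0 < Mh
  Lh_pos : 0 < Lh
  ch_pos : 0 < ch
  Ch_pos : 0 < Ch
  growth : ∀ t x : ℝ, 0 ≤ t → |h t x| ≤ Mh * (1 + |x|)
  strict_mono : ∀ t : ℝ, 0 ≤ t → StrictMono (h t)
  lip_time : ∀ s t x : ℝ, 0 ≤ s → 0 ≤ t → |h t x - h s x| ≤ Lh * |t - s|
  lip_lower : ∀ t x y : ℝ, 0 ≤ t → ch * |x - y| ≤ |h t x - h t y|
  lip_upper : ∀ t x y : ℝ, 0 ≤ t → |h t x - h t y| ≤ Ch * |x - y|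

/-- A process with càdlàg paths, integrable values, and values uniformly integrable
on every compact time interval. -/
structure NiceProcess {Ω : Type*} [MeasurableSpace Ω] (μ : Measure Ω) (Y : ℝ → Ω → ℝ) : Prop where
  cadlag : ∀ ω, CadlagOn fun t => Y t ω
  integrable : ∀ t : ℝ, 0 ≤ t → Integrable (Y t) μ
  unifInt : ∀ q : ℝ, 0 ≤ q → UniformIntegrable (fun t : Set.Icc (0:ℝ) q => Y t.1) 1 μ

/-- Solution of the Skorokhod problem with mean minimality condition and two constraints
associated with `(h, Y, l, u)`. -/
def MeanSP {Ω : Type*} [MeasurableSpace Ω] (μ : Measure Ω) (h : ℝ → ℝ → ℝ)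
    (Y : ℝ → Ω → ℝ) (l u : ℝ → ℝ) (X : ℝ → Ω → ℝ) (k : ℝ → ℝ) : Prop :=
  (∀ ω, CadlagOn fun t => X t ω) ∧ CadlagOn k ∧ k 0 = 0 ∧
  (∀ t : ℝ, 0 ≤ t → ∀ ω, X t ω = Y t ω + k t) ∧
  (∀ t : ℝ, 0 ≤ t → (∫ ω, h t (X t ω) ∂μ) ∈ Set.Icc (l t) (u t)) ∧
  (∀ t q : ℝ, 0 ≤ t → t ≤ q →
    ((∀ s : ℝ, t < s → s ≤ q → (∫ ω, h s (X s ω) ∂μ) < u s) → 0 ≤ k q - k t) ∧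
    ((∀ s : ℝ, t < s → s ≤ q → l s < ∫ ω, h s (X s ω) ∂μ) → k q - k t ≤ 0)) ∧
  ∀ t : ℝ, 0 < t →
    ((∫ ω, h t (X t ω) ∂μ) < u t → 0 ≤ k t - Function.leftLim k t) ∧
    (l t < ∫ ω, h t (X t ω) ∂μ → k t - Function.leftLim k t ≤ 0)

/-- Solution of the deterministic Skorokhod problem with two time-dependent barriers. -/
def DetSP (y lb ub x k : ℝ → ℝ) : Prop :=
  CadlagOn x ∧ CadlagOn k ∧ k 0 = 0 ∧
  (∀ t : ℝ, 0 ≤ t → x t = y t + k t ∧ x t ∈ Set.Icc (lb t) (ub t)) ∧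
  (∀ t q : ℝ, 0 ≤ t → t ≤ q →
    ((∀ s : ℝ, t < s → s ≤ q → x s < ub s) → 0 ≤ k q - k t) ∧
    ((∀ s : ℝ, t < s → s ≤ q → lb s < x s) → k q - k t ≤ 0)) ∧
  ∀ t : ℝ, 0 < t →
    (x t < ub t → 0 ≤ k t - Function.leftLim k t) ∧
    (lb t < x t → k t - Function.leftLim k t ≤ 0)

/-- Solution of the Skorokhod problem with mean minimality condition and a single
lower barrier `l`.  The minimality condition `∫ (E[h(s,X_s)] - l_s) dk_s = 0` is expressed
through any measure `ν` that agrees with the Lebesgue–Stieltjes measure of `k` on `[0,∞)`. -/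
def MeanSPLower {Ω : Type*} [MeasurableSpace Ω] (μ : Measure Ω) (h : ℝ → ℝ → ℝ)
    (Y : ℝ → Ω → ℝ) (l : ℝ → ℝ) (X : ℝ → Ω → ℝ) (k : ℝ → ℝ) : Prop :=
  (∀ ω, CadlagOn fun t => X t ω) ∧ CadlagOn k ∧ k 0 = 0 ∧
  (∀ t : ℝ, 0 ≤ t → ∀ ω, X t ω = Y t ω + k t) ∧
  (∀ t : ℝ, 0 ≤ t → l t ≤ ∫ ω, h t (X t ω) ∂μ) ∧
  MonotoneOn k (Set.Ici 0) ∧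
  ∀ ν : Measure ℝ,
    (∀ a b : ℝ, 0 ≤ a → a ≤ b → ν (Set.Ioc a b) = ENNReal.ofReal (k b - k a)) →
    ν {0} = 0 →
    ∀ t : ℝ, 0 ≤ t → (∫ s in Set.Icc 0 t, ((∫ ω, h s (X s ω) ∂μ) - l s) ∂ν) = 0

/-- Solution of the Skorokhod problem with mean minimality condition and a single
upper barrier `u`.  The minimality condition `∫ (u_s - E[h(s,X_s)]) d(-k)_s = 0` is expressed
through any measure `ν` that agrees with the Lebesgue–Stieltjes measure of `-k` on `[0,∞)`. -/
def MeanSPUpper {Ω : Type*} [MeasurableSpace Ω] (μ : Measure Ω) (h : ℝ → ℝ → ℝ)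
    (Y : ℝ → Ω → ℝ) (u : ℝ → ℝ) (X : ℝ → Ω → ℝ) (k : ℝ → ℝ) : Prop :=
  (∀ ω, CadlagOn fun t => X t ω) ∧ CadlagOn k ∧ k 0 = 0 ∧
  (∀ t : ℝ, 0 ≤ t → ∀ ω, X t ω = Y t ω + k t) ∧
  (∀ t : ℝ, 0 ≤ t → (∫ ω, h t (X t ω) ∂μ) ≤ u t) ∧
  AntitoneOn k (Set.Ici 0) ∧
  ∀ ν : Measure ℝ,
    (∀ a b : ℝ, 0 ≤ a → a ≤ b → ν (Set.Ioc a b) = ENNReal.ofReal (k a - k b)) →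
    ν {0} = 0 →
    ∀ t : ℝ, 0 ≤ t → (∫ s in Set.Icc 0 t, (u s - ∫ ω, h s (X s ω) ∂μ) ∂ν) = 0

/-- `OscN x η q` is the number of `η`-oscillations of `x` on `[0,q]`: the largest `m`
for which there are `0 ≤ t₁ ≤ t₂ ≤ ⋯ ≤ t_{2m} ≤ q` with `|x(t_{2i}) - x(t_{2i-1})| > η`. -/
def OscN (x : ℝ → ℝ) (η q : ℝ) : ℕ :=
  sSup {m : ℕ | ∃ a b : Fin m → ℝ,
    (∀ i, 0 ≤ a i ∧ a i ≤ b i ∧ b i ≤ q) ∧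
    (∀ i j, i < j → b i ≤ a j) ∧
    ∀ i, η < |x (b i) - x (a i)|}

/-- The left limit at `t` of a càdlàg function on `[0,∞)`, with the convention
`x(0-) = x(0)`. -/
def leftLimAt {E : Type*} [TopologicalSpace E] (x : ℝ → E) (t : ℝ) : E :=
  if t = 0 then x 0 else Function.leftLim x t

/-- Convergence `xₙ → x` in the Skorokhod `J₁` topology on `D([0,∞), E)`, expressed via
the sequence characterization used in the paper. -/
def DConvOn {E : Type*} [TopologicalSpace E] (xs : ℕ → ℝ → E) (x : ℝ → E) : Prop :=
  ∀ t : ℝ, 0 ≤ t → ∃ tn : ℕ → ℝ,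
    (∀ n, 0 ≤ tn n) ∧ Filter.Tendsto tn Filter.atTop (nhds t) ∧
    ∀ t' t'' : ℕ → ℝ, (∀ n, 0 ≤ t' n) → (∀ n, 0 ≤ t'' n) →
      Filter.Tendsto t' Filter.atTop (nhds t) → Filter.Tendsto t'' Filter.atTop (nhds t) →
      (∀ n, t' n < tn n ∧ tn n ≤ t'' n) →
      Filter.Tendsto (fun n => xs n (t' n)) Filter.atTop (nhds (leftLimAt x t)) ∧
      Filter.Tendsto (fun n => xs n (t'' n)) Filter.atTop (nhds (x t))

/-!
Write `f = λ - y`. The regulator `k` is the running supremum of `f` on `[0, t]` floored at `0`,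
and `x - λ = k - f ≥ 0`, so `dk` must be shown not to charge `B = {t > 0 | f t < k t}`.
At `t ∈ B`, right upper semicontinuity keeps `f` below `k t` just after `t`, so `k` is constant
on some `[t, r)`; and `k` has no jump at `t`, since `k t` is approached by values of `k` strictly
before `t`. Hence every point of `B` is the left end of a `dk`-null interval `[t, r)`. The
interiors of these intervals cover all but countably many points of `B`, so `B` is `dk`-null.
-/

section CountableNull

variable {ι : Type*} [LinearOrder ι] [TopologicalSpace ι] [OrderTopology ι]
  [SecondCountableTopology ι]

theorem countable_sdiff_biUnion_Ioo {B : Set ι} {r : ι → ι} (hr : ∀ s ∈ B, s < r s) :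
    (B \ ⋃ s ∈ B, Ioo s (r s)).Countable := by
  set U : Set ι := ⋃ s ∈ B, Ioo s (r s)
  have hle : ∀ a ∈ B \ U, ∀ b ∈ B \ U, a < b → r a ≤ b := fun a ha b hb hab =>
    not_lt.1 fun hlt => hb.2 (mem_biUnion ha.1 ⟨hab, hlt⟩)
  refine PairwiseDisjoint.countable_of_Ioo (y := r) (fun a ha b hb hab => ?_) fun s hs => hr s hs.1
  rcases hab.lt_or_gt with h | h
  · exact disjoint_left.2 fun u hua hub => ((hle a ha b hb h).trans_lt hub.1).not_gt hua.2
  · exact disjoint_left.2 fun u hua hub => ((hle b hb a ha h).trans_lt hua.1).not_gt hub.2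

theorem measure_null_of_forall_exists_Ico_null [MeasurableSpace ι] {μ : Measure ι} {B : Set ι}
    (h : ∀ s ∈ B, ∃ r, s < r ∧ μ (Ico s r) = 0) : μ B = 0 := by
  choose! r hr hμ using h
  have hIoo : μ (⋃ s ∈ B, Ioo s (r s)) = 0 := by
    refine measure_null_of_locally_null _ fun u hu => ?_
    obtain ⟨s, hs, hus⟩ := mem_iUnion₂.1 hu
    exact ⟨Ioo s (r s), mem_nhdsWithin_of_mem_nhds (Ioo_mem_nhds hus.1 hus.2),
      measure_mono_null Ioo_subset_Ico_self (hμ s hs)⟩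
  have hsdiff : μ (B \ ⋃ s ∈ B, Ioo s (r s)) = 0 :=
    (measure_null_iff_singleton (countable_sdiff_biUnion_Ioo hr)).2 fun s hs =>
      measure_mono_null (singleton_subset_iff.2 (left_mem_Ico.2 (hr s hs.1))) (hμ s hs.1)
  exact measure_mono_null (subset_sdiff_union _ _) (measure_union_null hsdiff hIoo)

end CountableNull

theorem bddAbove_image_of_isCompact {X α : Type*} [TopologicalSpace X] [SemilatticeSup α]
    [Nonempty α] {f : X → α} {K : Set X} (hK : IsCompact K)
    (hf : ∀ x ∈ K, (𝓝[K] x).IsBoundedUnder (· ≤ ·) f) : BddAbove (f '' K) := by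
  refine hK.induction_on (p := fun s => BddAbove (f '' s)) (by simp)
    (fun s t hst ht => ht.mono (image_mono hst))
    (fun s t hs ht => by simpa only [image_union] using hs.union ht) fun x hx => ?_
  obtain ⟨b, hb⟩ := hf x hx
  exact ⟨{u | f u ≤ b}, eventually_map.1 hb, b, forall_mem_image.2 fun u hu => hu⟩

section Cadlag

variable {E : Type*} [TopologicalSpace E]

theorem CadlagOn.sub [Sub E] [ContinuousSub E] {f g : ℝ → E} (hf : CadlagOn f)
    (hg : CadlagOn g) : CadlagOn (fun t => f t - g t) := by
  refine ⟨fun t ht => (hf.1 t ht).sub (hg.1 t ht), fun t ht => ?_⟩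
  obtain ⟨a, ha⟩ := hf.2 t ht
  obtain ⟨b, hb⟩ := hg.2 t ht
  exact ⟨a - b, ha.sub hb⟩

theorem CadlagOn.bddAbove_image_Icc [LinearOrder E] [OrderTopology E] {f : ℝ → E}
    (hf : CadlagOn f) (t : ℝ) : BddAbove (f '' Icc 0 t) := by
  have : Nonempty E := ⟨f 0⟩
  refine bddAbove_image_of_isCompact isCompact_Icc fun s hs => ?_
  have hright := (hf.1 s hs.1).isBoundedUnder_le
  rcases hs.1.eq_or_lt with rfl | hpos
  · exact hright.mono (nhdsWithin_mono 0 Icc_subset_Ici_self)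
  · obtain ⟨L, hL⟩ := hf.2 s hpos
    have hboth : (𝓝 s).IsBoundedUnder (· ≤ ·) f := by
      rw [← nhdsLT_sup_nhdsGE, IsBoundedUnder, map_sup]
      exact isBounded_sup hL.isBoundedUnder_le hright
    exact hboth.mono nhdsWithin_le_nhds

theorem cadlagOn_of_monotoneOn [ConditionallyCompleteLinearOrder E] [OrderTopology E] {f : ℝ → E}
    (hmono : MonotoneOn f (Ici 0)) (hright : ∀ t, 0 ≤ t → ContinuousWithinAt f (Ici t) t) :
    CadlagOn f := by
  refine ⟨hright, fun t ht => ⟨_, MonotoneOn.tendsto_nhdsWithin_Ioo_left (nonempty_Ioo.2 ht)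
    (hmono.mono fun s hs => hs.1.le) ⟨f t, forall_mem_image.2 fun s hs => ?_⟩⟩⟩
  exact hmono hs.1.le ht.le hs.2.le

end Cadlag

/-- The running supremum of `f` over `[a, t]`, floored at `c`. With `a = 0`, `c = 0` and
`f = λ - y` it is the regulator that keeps `y` above the barrier `λ`. Unless `a ≤ t`, it takes
the junk value `sSup ∅`. -/
def flooredRunningSup {ι α : Type*} [Preorder ι] [ConditionallyCompleteLinearOrder α]
    (f : ι → α) (a : ι) (c : α) (t : ι) : α :=
  sSup ((fun s => max (f s) c) '' Icc a t)

section FlooredRunningSup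

variable {ι α : Type*} [PartialOrder ι] [ConditionallyCompleteLinearOrder α]
  {f : ι → α} {a s t : ι} {b c : α}

theorem flooredRunningSup_self : flooredRunningSup f a c a = max (f a) c := by
  simp [flooredRunningSup]

theorem flooredRunningSup_le_iff (hf : BddAbove (f '' Icc a t)) (hat : a ≤ t) :
    flooredRunningSup f a c t ≤ b ↔ c ≤ b ∧ ∀ s ∈ Icc a t, f s ≤ b := by
  obtain ⟨M, hM⟩ := hf
  have hbdd : BddAbove ((fun s => max (f s) c) '' Icc a t) :=
    ⟨max M c, forall_mem_image.2 fun s hs => max_le_max_right c (hM (mem_image_of_mem f hs))⟩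
  have hne : (Icc a t).Nonempty := ⟨a, le_rfl, hat⟩
  rw [flooredRunningSup, csSup_le_iff hbdd (hne.image _), forall_mem_image]
  exact ⟨fun h => ⟨(le_max_right _ _).trans (h ⟨le_rfl, hat⟩),
      fun s hs => (le_max_left _ _).trans (h hs)⟩,
    fun h s hs => max_le (h.2 s hs) h.1⟩

theorem lt_flooredRunningSup_iff (hf : BddAbove (f '' Icc a t)) (hat : a ≤ t) :
    b < flooredRunningSup f a c t ↔ b < c ∨ ∃ s ∈ Icc a t, b < f s := by
  rw [← not_le, flooredRunningSup_le_iff hf hat]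
  push Not
  rw [imp_iff_not_or, not_le]

theorem floor_le_flooredRunningSup (hf : BddAbove (f '' Icc a t)) (hat : a ≤ t) :
    c ≤ flooredRunningSup f a c t :=
  ((flooredRunningSup_le_iff hf hat).1 le_rfl).1

theorem le_flooredRunningSup (hf : BddAbove (f '' Icc a t)) (hs : s ∈ Icc a t) :
    f s ≤ flooredRunningSup f a c t :=
  ((flooredRunningSup_le_iff hf (hs.1.trans hs.2)).1 le_rfl).2 s hs

theorem monotoneOn_flooredRunningSup (hf : ∀ t, BddAbove (f '' Icc a t)) :
    MonotoneOn (flooredRunningSup f a c) (Ici a) :=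
  fun _ hs t ht hst => (flooredRunningSup_le_iff (hf _) hs).2
    ⟨floor_le_flooredRunningSup (hf t) ht,
      fun _ hu => le_flooredRunningSup (hf t) ⟨hu.1, hu.2.trans hst⟩⟩

end FlooredRunningSup

section Regularity

variable {ι α : Type*} [LinearOrder ι] [ConditionallyCompleteLinearOrder α]
  {f : ι → α} {a t : ι} {b c : α}

theorem exists_lt_and_lt_flooredRunningSup (hf : ∀ t, BddAbove (f '' Icc a t)) (hat : a < t)
    (hlt : f t < flooredRunningSup f a c t) (hb : b < flooredRunningSup f a c t) :
    ∃ s, a ≤ s ∧ s < t ∧ b < flooredRunningSup f a c s := by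
  rcases (lt_flooredRunningSup_iff (hf t) hat.le).1 (max_lt hb hlt) with hc | ⟨s, hs, hfs⟩
  · have hbc : b < c := (le_max_left _ _).trans_lt hc
    exact ⟨a, le_rfl, hat, hbc.trans_le (floor_le_flooredRunningSup (hf a) le_rfl)⟩
  · obtain ⟨hbs, hts⟩ := max_lt_iff.1 hfs
    have hne : s ≠ t := fun h => hts.ne' (congrArg f h)
    exact ⟨s, hs.1, hs.2.lt_of_ne hne,
      hbs.trans_le (le_flooredRunningSup (hf s) ⟨hs.1, le_rfl⟩)⟩

variable [TopologicalSpace ι] [OrderTopology ι]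

theorem eventually_flooredRunningSup_le (hf : ∀ t, BddAbove (f '' Icc a t)) (hat : a ≤ t)
    (husc : UpperSemicontinuousWithinAt f (Ici t) t) (hb : flooredRunningSup f a c t ≤ b)
    (hfb : f t < b) : ∀ᶠ u in 𝓝[≥] t, flooredRunningSup f a c u ≤ b := by
  have hconst : Tendsto (fun _ => t) (𝓝[≥] t) (𝓝[≥] t) :=
    tendsto_nhdsWithin_iff.2 ⟨tendsto_const_nhds, .of_forall fun _ => self_mem_Ici⟩
  have hIcc : Tendsto (fun u => Icc t u) (𝓝[≥] t) (𝓝[≥] t).smallSets := hconst.Icc tendsto_id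
  obtain ⟨hcb, hpast⟩ := (flooredRunningSup_le_iff (hf t) hat).1 hb
  filter_upwards [hIcc.eventually (eventually_smallSets_forall.2 (husc b hfb)),
    self_mem_nhdsWithin] with u hfuture htu
  refine (flooredRunningSup_le_iff (hf u) (hat.trans htu)).2 ⟨hcb, fun s hs => ?_⟩
  rcases le_total s t with hst | hts
  · exact hpast s ⟨hs.1, hst⟩
  · exact (hfuture s ⟨hts, hs.2⟩).le

variable [TopologicalSpace α] [OrderTopology α]

theorem continuousWithinAt_Ici_flooredRunningSup [DenselyOrdered α]
    (hf : ∀ t, BddAbove (f '' Icc a t)) (hat : a ≤ t)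
    (husc : UpperSemicontinuousWithinAt f (Ici t) t) :
    ContinuousWithinAt (flooredRunningSup f a c) (Ici t) t := by
  refine tendsto_order.2 ⟨fun b hb => ?_, fun b hb => ?_⟩
  · filter_upwards [self_mem_nhdsWithin] with u htu
    exact hb.trans_le (monotoneOn_flooredRunningSup hf hat (hat.trans htu) htu)
  · obtain ⟨d, hd, hdb⟩ := exists_between hb
    have hfd : f t < d := (le_flooredRunningSup (hf t) ⟨hat, le_rfl⟩).trans_lt hd
    filter_upwards [eventually_flooredRunningSup_le hf hat husc hd.le hfd] with u hu
    exact hu.trans_lt hdb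

theorem continuousWithinAt_Iio_flooredRunningSup (hf : ∀ t, BddAbove (f '' Icc a t)) (hat : a < t)
    (hlt : f t < flooredRunningSup f a c t) :
    ContinuousWithinAt (flooredRunningSup f a c) (Iio t) t := by
  refine tendsto_order.2 ⟨fun b hb => ?_, fun b hb => ?_⟩
  · obtain ⟨s, has, hst, hbs⟩ := exists_lt_and_lt_flooredRunningSup hf hat hlt hb
    filter_upwards [Ioo_mem_nhdsLT hst] with u hu
    exact hbs.trans_le (monotoneOn_flooredRunningSup hf has (has.trans hu.1.le) hu.1.le)
  · filter_upwards [Ioo_mem_nhdsLT hat] with u hu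
    exact (monotoneOn_flooredRunningSup hf hu.1.le hat.le hu.2.le).trans_lt hb

end Regularity

section Stieltjes

variable {ι : Type*} [LinearOrder ι] [TopologicalSpace ι] [OrderTopology ι] [DenselyOrdered ι]
  [MeasurableSpace ι] {μ : Measure ι} {a t : ι}

theorem measure_singleton_eq_zero_of_continuousWithinAt_Iio {k : ι → ℝ}
    (hμ : ∀ s t, a ≤ s → s ≤ t → μ (Ioc s t) = ENNReal.ofReal (k t - k s)) (hat : a < t)
    (hk : ContinuousWithinAt k (Iio t) t) : μ {t} = 0 := by
  have hlim : Tendsto (fun s => ENNReal.ofReal (k t - k s)) (𝓝[<] t) (𝓝 0) := by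
    simpa using ENNReal.tendsto_ofReal (hk.tendsto.const_sub (k t))
  have : (𝓝[<] t).NeBot := nhdsLT_neBot_of_exists_lt ⟨a, hat⟩
  refine le_antisymm (ge_of_tendsto hlim ?_) zero_le
  filter_upwards [Ioo_mem_nhdsLT hat] with s hs
  rw [← hμ s t hs.1.le hs.2.le]
  exact measure_mono (singleton_subset_iff.2 ⟨hs.2, le_rfl⟩)

theorem measure_setOf_lt_flooredRunningSup [SecondCountableTopology ι] [NoMaxOrder ι]
    {f : ι → ℝ} {c : ℝ} (hf : ∀ t, BddAbove (f '' Icc a t))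
    (husc : ∀ t, a ≤ t → UpperSemicontinuousWithinAt f (Ici t) t)
    (hμ : ∀ s t, a ≤ s → s ≤ t → μ (Ioc s t) =
      ENNReal.ofReal (flooredRunningSup f a c t - flooredRunningSup f a c s)) :
    μ {t | a < t ∧ f t < flooredRunningSup f a c t} = 0 := by
  refine measure_null_of_forall_exists_Ico_null fun t ⟨hat, hlt⟩ => ?_
  have hflat : ∀ᶠ u in 𝓝[>] t, flooredRunningSup f a c u ≤ flooredRunningSup f a c t :=
    nhdsWithin_mono t Ioi_subset_Ici_self
      (eventually_flooredRunningSup_le hf hat.le (husc t hat.le) le_rfl hlt)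
  obtain ⟨r, hr, htr⟩ := (hflat.and self_mem_nhdsWithin).exists
  have hsingleton : μ {t} = 0 := measure_singleton_eq_zero_of_continuousWithinAt_Iio hμ hat
    (continuousWithinAt_Iio_flooredRunningSup hf hat hlt)
  have hIoc : μ (Ioc t r) = 0 := by
    rw [hμ t r hat.le (le_of_lt htr), ENNReal.ofReal_eq_zero]
    exact sub_nonpos.2 hr
  refine ⟨r, htr, measure_mono_null Ico_subset_Icc_self ?_⟩
  rw [← Icc_union_Ioc_eq_Icc le_rfl (le_of_lt htr), Icc_self]
  exact measure_union_null hsingleton hIoc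

theorem setIntegral_flooredRunningSup_sub_eq_zero [SecondCountableTopology ι] [NoMaxOrder ι]
    {f : ι → ℝ} {c : ℝ} (hf : ∀ t, BddAbove (f '' Icc a t))
    (husc : ∀ t, a ≤ t → UpperSemicontinuousWithinAt f (Ici t) t)
    (hμ : ∀ s t, a ≤ s → s ≤ t → μ (Ioc s t) =
      ENNReal.ofReal (flooredRunningSup f a c t - flooredRunningSup f a c s))
    (ha : μ {a} = 0) (t : ι) : ∫ s in Icc a t, (flooredRunningSup f a c s - f s) ∂μ = 0 := by
  refine setIntegral_eq_zero_of_ae_eq_zero ?_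
  have hnull := measure_union_null ha (measure_setOf_lt_flooredRunningSup hf husc hμ)
  refine measure_mono_null (fun s hs => ?_) hnull
  obtain ⟨hs, hne⟩ := Classical.not_imp.1 hs
  rcases hs.1.eq_or_lt with has | has
  · exact Or.inl has.symm
  · exact Or.inr ⟨has, (le_flooredRunningSup (hf s) ⟨hs.1, le_rfl⟩).lt_of_ne
      fun heq => hne (sub_eq_zero.2 heq.symm)⟩

end Stieltjes

theorem stmt_17_general (y lam : ℝ → ℝ)
    (hbdd : ∀ t, BddAbove ((fun s => lam s - y s) '' Icc 0 t))
    (husc : ∀ t, 0 ≤ t → UpperSemicontinuousWithinAt (fun s => lam s - y s) (Ici t) t)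
    (h0 : lam 0 ≤ y 0) (k x : ℝ → ℝ)
    (hk : ∀ t : ℝ, k t = sSup ((fun s => max (lam s - y s) 0) '' Set.Icc 0 t))
    (hx : ∀ t : ℝ, x t = y t + k t) :
    MonotoneOn k (Set.Ici 0) ∧ CadlagOn k ∧ k 0 = 0 ∧
    (∀ t : ℝ, 0 ≤ t → lam t ≤ x t) ∧
    ∀ ν : Measure ℝ,
      (∀ a b : ℝ, 0 ≤ a → a ≤ b → ν (Set.Ioc a b) = ENNReal.ofReal (k b - k a)) →
      ν {0} = 0 →
      ∀ t : ℝ, 0 ≤ t → (∫ s in Set.Icc 0 t, (x s - lam s) ∂ν) = 0 := by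
  obtain rfl : k = flooredRunningSup (fun s => lam s - y s) 0 0 := funext hk
  obtain rfl : x = fun t => y t + flooredRunningSup (fun s => lam s - y s) 0 0 t := funext hx
  have hmono := monotoneOn_flooredRunningSup (c := 0) hbdd
  refine ⟨hmono, cadlagOn_of_monotoneOn hmono fun t ht =>
    continuousWithinAt_Ici_flooredRunningSup hbdd ht (husc t ht), ?_, fun t ht => ?_,
    fun ν hν hν0 t _ => ?_⟩
  · rw [flooredRunningSup_self, max_eq_right (sub_nonpos.2 h0)]
  · exact sub_le_iff_le_add'.1 (le_flooredRunningSup (hbdd t) ⟨ht, le_rfl⟩)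
  · simpa only [sub_sub_eq_add_sub, add_comm] using
      setIntegral_flooredRunningSup_sub_eq_zero hbdd husc hν hν0 t

/-- the explicit solution of the deterministic Skorokhod problem with one
lower barrier. -/
theorem stmt_17 (y lam : ℝ → ℝ) (hy : CadlagOn y) (hlam : CadlagOn lam)
    (h0 : lam 0 ≤ y 0) (k x : ℝ → ℝ)
    (hk : ∀ t : ℝ, k t = sSup ((fun s => max (lam s - y s) 0) '' Set.Icc 0 t))
    (hx : ∀ t : ℝ, x t = y t + k t) :
    MonotoneOn k (Set.Ici 0) ∧ CadlagOn k ∧ k 0 = 0 ∧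
    (∀ t : ℝ, 0 ≤ t → lam t ≤ x t) ∧
    ∀ ν : Measure ℝ,
      (∀ a b : ℝ, 0 ≤ a → a ≤ b → ν (Set.Ioc a b) = ENNReal.ofReal (k b - k a)) →
      ν {0} = 0 →
      ∀ t : ℝ, 0 ≤ t → (∫ s in Set.Icc 0 t, (x s - lam s) ∂ν) = 0 :=
  stmt_17_general y lam (hlam.sub hy).bddAbove_image_Icc
    (fun t ht => ((hlam.sub hy).1 t ht).upperSemicontinuousWithinAt) h0 k x hk hx
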